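/- Let p be an odd prime with p > 3. Then ∑_{k=0}^{p-1} (C(2k,k)/2^k) · H_k ≡ (-1)^{(p-1)/2} · H_{(p-1)/2}/2 − p·E_{p-3} (mod p²). -/

import Mathlib

/-- `H n` is the harmonic number `∑_{k=1}^n 1/k`. -/
def H (n : ℕ) : ℚ := ∑ k ∈ Finset.Icc 1 n, (1 : ℚ) / k

/-- `H2 n` is the second-order harmonic number `∑_{k=1}^n 1/k²`. -/
def H2 (n : ℕ) : ℚ := ∑ k ∈ Finset.Icc 1 n, (1 : ℚ) / k ^ 2

/-- The Euler numbers: `E 0 = 1` and `∑_{0 ≤ k ≤ n, k even} C(n,k) E_{n-k} = 0` for `n ≥ 1`. -/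
def eulerNumber : ℕ → ℚ
  | 0 => 1
  | n + 1 =>
      -∑ j ∈ (Finset.range (n + 1)).attach,
        if Even (n + 1 - j.1) then ((n + 1).choose (n + 1 - j.1) : ℚ) * eulerNumber j.1 else 0
decreasing_by exact Finset.mem_range.mp j.2

/-- For rationals, `a ≡ b (mod m)` : `m` divides the numerator of `a - b` in lowest terms. -/
def ratModEq (m : ℕ) (a b : ℚ) : Prop := (m : ℤ) ∣ (a - b).num

/-!
Let `p = 2n + 1` and `F(x) = ∑_{k < p} (-2)^k H_k C(x, k)`. As `C(-1/2, k) = C(2k, k) / (-4)^k`,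
the sum in question is `F(-1/2)`, and as `-1/2 = n - p/2`, it is `F(n) - (p/2) F'(n)` modulo `p²`.

Pascal's rule gives `F(m + 1) + F(m) = ((-1)^(m + 1) - 1) / (m + 1)` for `m < p - 1`. Telescoping
from `F(0) = 0` shows `2 F(n) = (-1)^n (H_n + p B)`, where `B ≡ S := ∑_{j ≤ n} (-1)^j / j²`
modulo `p`. Modulo `p` the recursion also says that `G(x) = F(x) - F(-1 - x)` satisfies
`G(x + 1) + G(x) = -2 (x + 1)^(p - 2)` at every residue, hence as polynomials. Differentiating and
telescoping from the critical point `0` of `G` yields `2 F'(n) = G'(n) = 4 (-1)^n S`.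

Finally `S ≡ 2 (-1)^n E_{p-3}`: for the umbral functional `L : X^k ↦ E_k` one has
`L(q(X + 1)) + L(q(X - 1)) = 2 q(0)`, so the values of `L` at `(X + 2i + 1)^(p - 3)` telescope from
`0` at `i = 0` to `E_{p-3}` at `i = n`, where `2n + 1 ≡ 0`.
-/

open Finset Polynomial
open scoped Nat Ring

section AlternatingSums

lemma eq_neg_one_pow_mul_of_succ_add {R : Type*} [CommRing R] {u c : ℕ → R} {n : ℕ}
    (h : ∀ m < n, u (m + 1) + u m = c (m + 1)) :
    u n = (-1) ^ n * (u 0 + ∑ j ∈ Icc 1 n, (-1) ^ j * c j) := by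
  induction n with
  | zero => simp
  | succ n ih =>
    have ih := ih fun m hm ↦ h m (by lia)
    have sign : (-1 : R) ^ n * (-1) ^ n = 1 := by simp [← mul_pow]
    rw [sum_Icc_succ_top (by lia), pow_succ]
    linear_combination h n (by lia) - ih - c (n + 1) * sign

lemma sum_Icc_one_two_mul {M : Type*} [AddCommMonoid M] (f : ℕ → M) (n : ℕ) :
    ∑ j ∈ Icc 1 (2 * n), f j = ∑ j ∈ Icc 1 n, (f j + f (2 * n + 1 - j)) := by
  have reflect := sum_Ico_reflect f 1 (show n + 1 ≤ 2 * n + 1 + 1 by lia)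
  rw [show 2 * n + 1 + 1 - (n + 1) = n + 1 by lia, Nat.add_sub_cancel] at reflect
  simp only [← Ico_add_one_right_eq_Icc]
  rw [sum_add_distrib, reflect, sum_Ico_consecutive f (by lia) (by lia)]

lemma neg_one_pow_two_mul_add_one_sub {R : Type*} [Ring R] {n j : ℕ} (hj : j ≤ 2 * n + 1) :
    (-1 : R) ^ (2 * n + 1 - j) = -(-1) ^ j := by
  rw [neg_one_pow_congr (show Even (2 * n + 1 - j) ↔ Even (j + 1) by grind), pow_succ,
    mul_neg_one]

end AlternatingSums

section EulerNumbers

lemma eulerNumber_sum_eq_zero {n : ℕ} (hn : n ≠ 0) :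
    ∑ j ∈ range (n + 1) with Even (n - j), (n.choose j : ℚ) * eulerNumber j = 0 := by
  obtain ⟨n, rfl⟩ := Nat.exists_eq_succ_of_ne_zero hn
  rw [sum_filter, sum_range_succ, Nat.sub_self, if_pos Even.zero, Nat.choose_self, Nat.cast_one,
    one_mul, Nat.succ_eq_add_one, eulerNumber,
    sum_attach _ fun j ↦ if Even (n + 1 - j) then ((n + 1).choose (n + 1 - j) : ℚ) * eulerNumber j
      else 0, add_neg_eq_zero]
  refine sum_congr rfl fun j hj ↦ ?_
  rw [Nat.choose_symm (mem_range.mp hj).le]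

lemma eulerNumber_mem_range_intCast (n : ℕ) : eulerNumber n ∈ (Int.castRingHom ℚ).range := by
  induction n using Nat.strong_induction_on with
  | _ n ih =>
    cases n with
    | zero => simp only [eulerNumber, one_mem]
    | succ n =>
      rw [eulerNumber]
      refine neg_mem (sum_mem fun j _ ↦ ?_)
      split_ifs
      · exact mul_mem (natCast_mem _ _) (ih j (mem_range.mp j.2))
      · exact zero_mem _

/-- The Euler number `E n` as an integer, so that it can be cast to any ring. -/
def eulerInt (n : ℕ) : ℤ := (eulerNumber n).num

lemma eulerInt_cast (n : ℕ) : (eulerInt n : ℚ) = eulerNumber n := by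
  obtain ⟨z, hz⟩ := eulerNumber_mem_range_intCast n
  rw [eulerInt, ← hz, eq_intCast, Rat.num_intCast]

lemma eulerInt_zero : eulerInt 0 = 1 := by
  simp [eulerInt, eulerNumber]

lemma eulerInt_sum_eq_zero {n : ℕ} (hn : n ≠ 0) :
    ∑ j ∈ range (n + 1) with Even (n - j), (n.choose j : ℤ) * eulerInt j = 0 := by
  have h := eulerNumber_sum_eq_zero hn
  simp only [← eulerInt_cast] at h
  exact_mod_cast h

lemma eulerInt_eq_zero_of_odd {n : ℕ} (hn : Odd n) : eulerInt n = 0 := by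
  induction n using Nat.strong_induction_on with
  | _ n ih =>
    rw [← eulerInt_sum_eq_zero hn.pos.ne', sum_filter, sum_range_succ, sum_eq_zero]
    · simp
    · intro j hj
      have hjn := mem_range.mp hj
      split_ifs with heven
      · rw [ih j hjn (by grind), mul_zero]
      · rfl

variable (R : Type*) [CommRing R]

/-- The umbral functional of the Euler numbers: the linear functional on `R[X]` sending `X ^ k`
to `E k`. In particular it sends `(X + c) ^ N` to `2 ^ N` times the value at `(c + 1) / 2` of the
`N`-th Euler polynomial. -/
noncomputable def eulerFunctional : R[X] →ₗ[R] R :=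
  lsum fun k ↦ (eulerInt k : R) • LinearMap.id

variable {R}

lemma eulerFunctional_monomial (k : ℕ) (a : R) :
    eulerFunctional R (monomial k a) = a * eulerInt k := by
  rw [eulerFunctional, lsum_apply, sum_monomial_index a _ (mul_zero _), LinearMap.smul_apply,
    LinearMap.id_apply, smul_eq_mul, mul_comm]

lemma eulerFunctional_X_add_C_pow (c : R) (N : ℕ) :
    eulerFunctional R ((X + C c) ^ N) =
      ∑ j ∈ range (N + 1), c ^ (N - j) * (N.choose j * eulerInt j) := by
  rw [add_pow, map_sum]
  refine sum_congr rfl fun j _ ↦ ?_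
  have term : X ^ j * C c ^ (N - j) * (N.choose j : R[X]) =
      monomial j (c ^ (N - j) * (N.choose j : R)) := by
    rw [← C_mul_X_pow_eq_monomial, C_mul, C_pow, C_eq_natCast]
    ring
  rw [term, eulerFunctional_monomial, mul_assoc]

lemma eulerFunctional_X_add_one_pow_add_X_sub_one_pow (N : ℕ) :
    eulerFunctional R ((X + C 1) ^ N) + eulerFunctional R ((X + C (-1)) ^ N) = 2 * 0 ^ N := by
  have even_part : eulerFunctional R ((X + C 1) ^ N) + eulerFunctional R ((X + C (-1)) ^ N) =
      2 * ((∑ j ∈ range (N + 1) with Even (N - j), (N.choose j : ℤ) * eulerInt j : ℤ) : R) := by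
    rw [eulerFunctional_X_add_C_pow, eulerFunctional_X_add_C_pow, ← sum_add_distrib, sum_filter,
      Int.cast_sum, mul_sum]
    refine sum_congr rfl fun j _ ↦ ?_
    split_ifs with h
    · rw [h.neg_one_pow]
      push_cast
      ring
    · rw [(Nat.not_even_iff_odd.mp h).neg_one_pow]
      push_cast
      ring
  rcases eq_or_ne N 0 with rfl | hN
  · rw [even_part]
    simp [eulerInt_zero]
  · rw [even_part, eulerInt_sum_eq_zero hN, zero_pow hN, Int.cast_zero]

lemma eulerFunctional_comp_X_add_one_add_comp_X_sub_one (q : R[X]) :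
    eulerFunctional R (q.comp (X + C 1)) + eulerFunctional R (q.comp (X + C (-1))) =
      2 * q.eval 0 := by
  induction q using Polynomial.induction_on' with
  | add q r hq hr =>
    simp only [add_comp, map_add, eval_add]
    linear_combination hq + hr
  | monomial N a =>
    rw [monomial_comp, monomial_comp, ← smul_eq_C_mul, ← smul_eq_C_mul, map_smul, map_smul,
      ← smul_add, eulerFunctional_X_add_one_pow_add_X_sub_one_pow, eval_monomial, smul_eq_mul]
    ring

lemma eulerFunctional_X_add_one_pow_of_even {N : ℕ} (hN : Even N) (hN0 : N ≠ 0) :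
    eulerFunctional R ((X + C 1) ^ N) = 0 := by
  rw [eulerFunctional_X_add_C_pow, ← Int.cast_zero, ← eulerInt_sum_eq_zero hN0, sum_filter,
    Int.cast_sum]
  refine sum_congr rfl fun j hj ↦ ?_
  have hjN := mem_range_succ_iff.mp hj
  split_ifs with h
  · simp
  · rw [eulerInt_eq_zero_of_odd (by grind)]
    simp

lemma neg_one_pow_mul_eulerFunctional {N : ℕ} (hN : Even N) (hN0 : N ≠ 0) (m : ℕ) :
    (-1) ^ m * eulerFunctional R ((X + C (2 * (m : R) + 1)) ^ N) =
      2 * ∑ j ∈ Icc 1 m, (-1) ^ j * (2 * (j : R)) ^ N := by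
  have telescope := eq_neg_one_pow_mul_of_succ_add (n := m)
    (u := fun i : ℕ ↦ eulerFunctional R ((X + C (2 * (i : R) + 1)) ^ N))
    (c := fun i : ℕ ↦ 2 * (2 * (i : R)) ^ N) fun i _ ↦ ?_
  · rw [telescope, ← mul_assoc, ← mul_pow, neg_one_mul, neg_neg, one_pow, one_mul, Nat.cast_zero,
      mul_zero, zero_add, eulerFunctional_X_add_one_pow_of_even hN hN0, zero_add, mul_sum]
    exact sum_congr rfl fun j _ ↦ by ring
  · have shift := eulerFunctional_comp_X_add_one_add_comp_X_sub_one
      ((X + C (2 * (i + 1 : R))) ^ N)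
    simp only [pow_comp, add_comp, X_comp, C_comp, add_assoc, ← C_add, eval_pow, eval_add, eval_X,
      eval_C, zero_add] at shift
    convert shift using 6
    · push_cast
      ring
    · ring
    · push_cast
      ring

lemma neg_one_pow_mul_eulerInt {N : ℕ} (hN : Even N) (hN0 : N ≠ 0) {m : ℕ}
    (hm : (2 * m + 1 : R) = 0) :
    (-1) ^ m * (eulerInt N : R) = 2 * ∑ j ∈ Icc 1 m, (-1) ^ j * (2 * (j : R)) ^ N := by
  rw [← neg_one_pow_mul_eulerFunctional hN hN0, hm, C_0, add_zero, X_pow_eq_monomial,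
    eulerFunctional_monomial, one_mul]

end EulerNumbers

section RingHarmonic

variable {R : Type*} [CommRing R]

lemma map_ringInverse_of_isUnit {S : Type*} [CommRing S] (f : R →+* S) {x : R} (hx : IsUnit x) :
    f x⁻¹ʳ = (f x)⁻¹ʳ := by
  obtain ⟨u, rfl⟩ := hx
  rw [Ring.inverse_unit, ← MonoidHom.coe_coe f, ← Units.coe_map, ← Units.coe_map,
    Ring.inverse_unit, map_inv]

lemma isUnit_natCast_of_isUnit_factorial {N j : ℕ} (hN : IsUnit (N ! : R)) (hj0 : j ≠ 0)
    (hjN : j ≤ N) : IsUnit (j : R) :=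
  isUnit_of_dvd_unit (Nat.cast_dvd_cast (Nat.dvd_factorial hj0.pos hjN)) hN

lemma isUnit_factorial_of_le {N k : ℕ} (hN : IsUnit (N ! : R)) (hk : k ≤ N) :
    IsUnit (k ! : R) :=
  isUnit_of_dvd_unit (Nat.cast_dvd_cast (Nat.factorial_dvd_factorial hk)) hN

variable (R) in
/-- The harmonic number `∑_{k=1}^n 1/k` computed in the ring `R`, meaningful when `n !` is a unit
of `R` (`Ring.inverse` is `0` at non-units). It lets `H n` be reduced modulo `p`. -/
noncomputable def ringHarmonic (n : ℕ) : R := ∑ k ∈ Icc 1 n, (k : R)⁻¹ʳ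

lemma ringHarmonic_succ (n : ℕ) :
    ringHarmonic R (n + 1) = ringHarmonic R n + ((n + 1 : ℕ) : R)⁻¹ʳ :=
  sum_Icc_succ_top (by lia) _

lemma ringHarmonic_rat (n : ℕ) : ringHarmonic ℚ n = H n := by
  simp only [ringHarmonic, H, Ring.inverse_eq_inv, one_div]

lemma map_ringHarmonic {S : Type*} [CommRing S] (f : R →+* S) {n : ℕ} (hn : IsUnit (n ! : R)) :
    f (ringHarmonic R n) = ringHarmonic S n := by
  rw [ringHarmonic, map_sum]
  refine sum_congr rfl fun k hk ↦ ?_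
  obtain ⟨hk1, hkn⟩ := mem_Icc.mp hk
  rw [map_ringInverse_of_isUnit f (isUnit_natCast_of_isUnit_factorial hn (by lia) hkn),
    map_natCast]

lemma sum_one_add_neg_one_pow_mul_inverse {m : ℕ} (hm : IsUnit ((2 * m)! : R)) :
    ∑ j ∈ Icc 1 (2 * m), (1 + (-1) ^ j) * (j : R)⁻¹ʳ = ringHarmonic R m := by
  induction m with
  | zero => simp [ringHarmonic]
  | succ m ih =>
    have two_unit : IsUnit (2 : R) :=
      isUnit_natCast_of_isUnit_factorial (j := 2) hm (by lia) (by lia)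
    have double : ((2 * m + 1 + 1 : ℕ) : R)⁻¹ʳ = ((m + 1 : ℕ) : R)⁻¹ʳ * 2⁻¹ʳ := by
      rw [← Ring.inverse_mul (.inl two_unit)]
      push_cast
      ring_nf
    rw [show 2 * (m + 1) = 2 * m + 1 + 1 by ring, sum_Icc_succ_top (by lia),
      sum_Icc_succ_top (by lia), ih (isUnit_factorial_of_le hm (by lia)), ringHarmonic_succ,
      double, (odd_two_mul_add_one m).neg_one_pow, (odd_two_mul_add_one m).add_one.neg_one_pow]
    linear_combination ((m + 1 : ℕ) : R)⁻¹ʳ * Ring.mul_inverse_cancel _ two_unit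

variable (R) in
/-- The correction term `B` in `2 * ∑_{j ≤ n} (1 - (-1)^j) / j = H n + (2 * n + 1) * B`. For
`p = 2 * n + 1` it is the first-order `p`-adic deviation of this sum from a harmonic number. -/
noncomputable def harmonicDefect (n : ℕ) : R :=
  ∑ j ∈ Icc 1 n, (1 - (-1) ^ j) * ((j : R)⁻¹ʳ * ((2 * n + 1 - j : ℕ) : R)⁻¹ʳ)

lemma map_harmonicDefect {S : Type*} [CommRing S] (f : R →+* S) {n : ℕ}
    (hn : IsUnit ((2 * n)! : R)) : f (harmonicDefect R n) = harmonicDefect S n := by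
  rw [harmonicDefect, map_sum]
  refine sum_congr rfl fun j hj ↦ ?_
  obtain ⟨hj1, hjn⟩ := mem_Icc.mp hj
  rw [map_mul, map_mul,
    map_ringInverse_of_isUnit _ (isUnit_natCast_of_isUnit_factorial hn (by lia) (by lia)),
    map_ringInverse_of_isUnit _ (isUnit_natCast_of_isUnit_factorial hn (by lia) (by lia)),
    map_natCast, map_natCast, map_sub, map_one, map_pow, map_neg, map_one]

/- The even denominators `j ≤ 2n` contribute half of `H n`; those beyond `n` are `2n + 1 - i` with
`i ≤ n` odd, and `1/(p - i) = -1/i + p/(i(p - i))` for `p = 2n + 1`. -/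
lemma two_mul_sum_one_sub_neg_one_pow_mul_inverse {n : ℕ} (hn : IsUnit ((2 * n)! : R)) :
    2 * ∑ j ∈ Icc 1 n, (1 - (-1) ^ j) * (j : R)⁻¹ʳ =
      ringHarmonic R n + (2 * n + 1) * harmonicDefect R n := by
  have evens := sum_one_add_neg_one_pow_mul_inverse hn
  rw [sum_Icc_one_two_mul] at evens
  have pairs : ∀ j ∈ Icc 1 n, 2 * ((1 - (-1) ^ j) * (j : R)⁻¹ʳ) +
      ((1 + (-1) ^ j) * (j : R)⁻¹ʳ +
        (1 + (-1) ^ (2 * n + 1 - j)) * ((2 * n + 1 - j : ℕ) : R)⁻¹ʳ) =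
      2 * (j : R)⁻¹ʳ +
        (2 * n + 1) * ((1 - (-1) ^ j) * ((j : R)⁻¹ʳ * ((2 * n + 1 - j : ℕ) : R)⁻¹ʳ)) := by
    intro j hj
    obtain ⟨hj1, hjn⟩ := mem_Icc.mp hj
    have sign : (-1 : R) ^ (2 * n + 1 - j) = -(-1) ^ j :=
      neg_one_pow_two_mul_add_one_sub (by lia)
    have inv_left := Ring.mul_inverse_cancel _
      (isUnit_natCast_of_isUnit_factorial (j := j) hn (by lia) (by lia))
    have inv_right := Ring.mul_inverse_cancel _
      (isUnit_natCast_of_isUnit_factorial (j := 2 * n + 1 - j) hn (by lia) (by lia))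
    have split : (2 * n + 1 : R) = j + (2 * n + 1 - j : ℕ) := by
      exact_mod_cast congrArg (Nat.cast : ℕ → R) (show 2 * n + 1 = j + (2 * n + 1 - j) by lia)
    rw [sign, split]
    linear_combination (-(1 - (-1) ^ j) * ((2 * n + 1 - j : ℕ) : R)⁻¹ʳ) * inv_left -
      (1 - (-1) ^ j) * (j : R)⁻¹ʳ * inv_right
  have total := sum_congr rfl pairs
  rw [sum_add_distrib, evens, sum_add_distrib, ← mul_sum, ← mul_sum, ← mul_sum,
    ← ringHarmonic, ← harmonicDefect] at total
  linear_combination total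

end RingHarmonic

section NewtonSeries

variable {R : Type*} [CommRing R]

/-- The truncated Newton series `∑_{k ≤ N} a k * C(X, k)` with `C(X, k) = X(X-1)⋯(X-k+1)/k!`,
meaningful when `N !` is a unit of `R`. -/
noncomputable def newtonSeries (a : ℕ → R) (N : ℕ) : R[X] :=
  ∑ k ∈ range (N + 1), C (a k * (k ! : R)⁻¹ʳ) * descPochhammer R k

lemma eval_newtonSeries (a : ℕ → R) (N : ℕ) (x : R) :
    (newtonSeries a N).eval x =
      ∑ k ∈ range (N + 1), a k * ((k ! : R)⁻¹ʳ * (descPochhammer R k).eval x) := by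
  simp only [newtonSeries, eval_finsetSum, eval_mul, eval_C, mul_assoc]

lemma eval_natCast_newtonSeries (a : ℕ → R) {N m : ℕ} (hN : IsUnit (N ! : R)) (hm : m ≤ N) :
    (newtonSeries a N).eval (m : R) = ∑ k ∈ range (m + 1), (m.choose k : R) * a k := by
  rw [eval_newtonSeries]
  symm
  refine sum_subset_zero_on_sdiff (range_mono (by lia)) (fun k hk ↦ ?_) fun k hk ↦ ?_
  · have hmk : m < k := by simpa using (mem_sdiff.mp hk).2
    rw [descPochhammer_eval_eq_descFactorial, Nat.descFactorial_of_lt hmk]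
    simp
  · have hkm := mem_range_succ_iff.mp hk
    rw [descPochhammer_eval_eq_descFactorial, Nat.descFactorial_eq_factorial_mul_choose,
      Nat.cast_mul, Ring.inverse_mul_cancel_left _ _ (isUnit_factorial_of_le hN (by lia)), mul_comm]

lemma neg_four_pow_mul_eval_descPochhammer {x : R} (hx : 2 * x = -1) (k : ℕ) :
    (-4) ^ k * (descPochhammer R k).eval x = k ! * k.centralBinom := by
  induction k with
  | zero => simp
  | succ k ih =>
    have central : ((k : R) + 1) * (k + 1).centralBinom = 2 * (2 * k + 1) * k.centralBinom := by
      exact_mod_cast congrArg (Nat.cast : ℕ → R) (Nat.succ_mul_centralBinom_succ k)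
    rw [descPochhammer_succ_eval, Nat.factorial_succ, pow_succ]
    push_cast
    linear_combination (2 * (2 * (k : R) + 1)) * ih - (k ! : R) * central -
      2 * ((-4) ^ k * (descPochhammer R k).eval x) * hx

lemma eval_neg_half_newtonSeries (a : ℕ → R) {N : ℕ} (hN : IsUnit (N ! : R)) {h : R}
    (hh : 2 * h = 1) :
    (newtonSeries (fun k ↦ (-2) ^ k * a k) N).eval (-h) =
      ∑ k ∈ range (N + 1), k.centralBinom * h ^ k * a k := by
  rw [eval_newtonSeries]
  refine sum_congr rfl fun k hk ↦ ?_
  have hkN := mem_range_succ_iff.mp hk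
  have pow_cancel : (-2 : R) ^ k = h ^ k * (-4) ^ k := by
    rw [← mul_pow]
    congr 1
    linear_combination 2 * hh
  have central := neg_four_pow_mul_eval_descPochhammer (x := -h) (by linear_combination -hh) k
  rw [pow_cancel]
  linear_combination h ^ k * a k * (k ! : R)⁻¹ʳ * central + h ^ k * a k * k.centralBinom *
    Ring.inverse_mul_cancel _ (isUnit_factorial_of_le hN hkN)

lemma natDegree_newtonSeries_le [IsDomain R] (a : ℕ → R) (N : ℕ) :
    (newtonSeries a N).natDegree ≤ N :=
  natDegree_sum_le_of_forall_le _ _ fun k hk ↦ (natDegree_C_mul_le _ _).trans <| by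
    rw [descPochhammer_natDegree]
    exact mem_range_succ_iff.mp hk

lemma map_newtonSeries {S : Type*} [CommRing S] (f : R →+* S) (a : ℕ → R) {N : ℕ}
    (hN : IsUnit (N ! : R)) : (newtonSeries a N).map f = newtonSeries (f ∘ a) N := by
  rw [newtonSeries, newtonSeries, Polynomial.map_sum]
  refine sum_congr rfl fun k hk ↦ ?_
  have hk_unit := isUnit_factorial_of_le hN (mem_range_succ_iff.mp hk)
  rw [Polynomial.map_mul, map_C, descPochhammer_map, map_mul, map_ringInverse_of_isUnit f hk_unit,
    map_natCast, Function.comp_apply]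

lemma sum_choose_mul_pow_mul_inverse {m : ℕ} (hm : IsUnit ((m + 1)! : R)) (x : R) :
    ∑ k ∈ range (m + 1), (m.choose k : R) * (x ^ (k + 1) * ((k + 1 : ℕ) : R)⁻¹ʳ) =
      ((x + 1) ^ (m + 1) - 1) * ((m + 1 : ℕ) : R)⁻¹ʳ := by
  have binomial := add_pow x 1 (m + 1)
  rw [sum_range_succ'] at binomial
  rw [Ring.eq_mul_inverse_iff_mul_eq _ _ _
    (isUnit_natCast_of_isUnit_factorial hm (by lia) le_rfl), sum_mul, binomial]
  simp only [one_pow, mul_one, pow_zero, Nat.choose_zero_right, Nat.cast_one,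
    add_sub_cancel_right]
  refine sum_congr rfl fun k hk ↦ ?_
  have hkm := mem_range_succ_iff.mp hk
  have absorb : ((m + 1 : ℕ) : R) * m.choose k = (m + 1).choose (k + 1) * ((k + 1 : ℕ) : R) := by
    exact_mod_cast congrArg (Nat.cast : ℕ → R) (Nat.add_one_mul_choose_eq m k)
  have inv_cancel := Ring.mul_inverse_cancel _
    (isUnit_natCast_of_isUnit_factorial (j := k + 1) hm (by lia) (by lia))
  linear_combination x ^ (k + 1) * ((k + 1 : ℕ) : R)⁻¹ʳ * absorb +
    x ^ (k + 1) * (m + 1).choose (k + 1) * inv_cancel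

variable (R) in
/-- The polynomial `∑_{k ≤ N} (-2)^k H k C(X, k)`, whose value at `-1/2` is
`∑_{k ≤ N} C(2k, k) / 2^k * H k`. -/
noncomputable def harmonicNewton (N : ℕ) : R[X] :=
  newtonSeries (fun k ↦ (-2) ^ k * ringHarmonic R k) N

lemma eval_succ_add_eval_harmonicNewton {N m : ℕ} (hN : IsUnit (N ! : R)) (hm : m < N) :
    (harmonicNewton R N).eval ((m + 1 : ℕ) : R) + (harmonicNewton R N).eval (m : R) =
      ((-1) ^ (m + 1) - 1) * ((m + 1 : ℕ) : R)⁻¹ʳ := by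
  have pascal := sum_choose_succ_mul (fun k _ ↦ (-2 : R) ^ k * ringHarmonic R k) m
  rw [harmonicNewton, eval_natCast_newtonSeries _ hN hm, eval_natCast_newtonSeries _ hN hm.le,
    pascal, ← sum_add_distrib, ← sum_add_distrib, show (-1 : R) = -2 + 1 by ring,
    ← sum_choose_mul_pow_mul_inverse (isUnit_factorial_of_le hN hm)]
  refine sum_congr rfl fun k _ ↦ ?_
  rw [ringHarmonic_succ]
  ring

lemma eval_natCast_harmonicNewton {N n : ℕ} (hN : IsUnit (N ! : R)) (hn : n ≤ N) :
    (harmonicNewton R N).eval (n : R) =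
      (-1) ^ n * ∑ j ∈ Icc 1 n, (1 - (-1) ^ j) * (j : R)⁻¹ʳ := by
  rw [eq_neg_one_pow_mul_of_succ_add (u := fun m : ℕ ↦ (harmonicNewton R N).eval (m : R))
    (c := fun m ↦ ((-1) ^ m - 1) * (m : R)⁻¹ʳ)
    fun m hm ↦ eval_succ_add_eval_harmonicNewton hN (by lia)]
  have eval_zero : (harmonicNewton R N).eval ((0 : ℕ) : R) = 0 := by
    rw [harmonicNewton, eval_natCast_newtonSeries _ hN (Nat.zero_le N)]
    simp [ringHarmonic]
  rw [eval_zero, zero_add]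
  congr 1
  refine sum_congr rfl fun j _ ↦ ?_
  have sign : (-1 : R) ^ j * (-1) ^ j = 1 := by simp [← mul_pow]
  linear_combination (j : R)⁻¹ʳ * sign

lemma map_harmonicNewton {S : Type*} [CommRing S] (f : R →+* S) {N : ℕ} (hN : IsUnit (N ! : R)) :
    (harmonicNewton R N).map f = harmonicNewton S N := by
  rw [harmonicNewton, map_newtonSeries f _ hN, harmonicNewton, newtonSeries, newtonSeries]
  refine sum_congr rfl fun k hk ↦ ?_
  have hk_unit := isUnit_factorial_of_le hN (mem_range_succ_iff.mp hk)
  rw [Function.comp_apply, map_mul f, map_pow f, map_neg, map_ofNat, map_ringHarmonic f hk_unit]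

end NewtonSeries

section Antisymmetrization

variable {R : Type*} [CommRing R]

/-- The antisymmetrization `F(X) - F(-1 - X)` of a polynomial under the reflection `x ↦ -1 - x`,
whose fixed point is `-1/2`. -/
noncomputable def antisymmetrization (F : R[X]) : R[X] := F - F.comp (-1 - X)

lemma eval_antisymmetrization (F : R[X]) (x : R) :
    (antisymmetrization F).eval x = F.eval x - F.eval (-1 - x) := by
  simp only [antisymmetrization, eval_sub, eval_comp, eval_neg, eval_one, eval_X]

lemma eval_derivative_antisymmetrization (F : R[X]) (x : R) :
    (derivative (antisymmetrization F)).eval x =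
      (derivative F).eval x + (derivative F).eval (-1 - x) := by
  simp [antisymmetrization, derivative_comp]

lemma natDegree_antisymmetrization_le (F : R[X]) :
    (antisymmetrization F).natDegree ≤ F.natDegree := by
  have reflection : (-1 - X : R[X]).natDegree ≤ 1 := by compute_degree
  have comp_degree : (F.comp (-1 - X)).natDegree ≤ F.natDegree :=
    natDegree_comp_le.trans (mul_le_of_le_one_right (Nat.zero_le _) reflection)
  exact (natDegree_sub_le _ _).trans (max_le le_rfl comp_degree)

end Antisymmetrization

section ModP

lemma sum_univ_zmod {m : ℕ} [NeZero m] {M : Type*} [AddCommMonoid M] (f : ZMod m → M) :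
    ∑ x, f x = f 0 + ∑ j ∈ Icc 1 (m - 1), f j := by
  have range_eq : ∑ j ∈ range m, f j = ∑ x, f x :=
    sum_nbij' (fun j ↦ (j : ZMod m)) ZMod.val (fun _ _ ↦ mem_univ _)
      (fun x _ ↦ mem_range.mpr x.val_lt) (fun _ hj ↦ ZMod.val_cast_of_lt (mem_range.mp hj))
      (fun x _ ↦ ZMod.natCast_zmod_val x) fun _ _ ↦ rfl
  rw [← range_eq, sum_range_eq_add_Ico _ (NeZero.pos m), Nat.cast_zero,
    ← Ico_add_one_right_eq_Icc, Nat.sub_one_add_one (NeZero.ne m)]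

lemma two_mul_add_one_eq_zero_zmod {p n : ℕ} (hpn : p = 2 * n + 1) :
    (2 * n + 1 : ZMod p) = 0 := by
  exact_mod_cast (ZMod.natCast_eq_zero_iff _ _).mpr (dvd_of_eq hpn)

variable {p : ℕ} [Fact p.Prime]

lemma isUnit_factorial_zmod {m : ℕ} (hm : m < p) : IsUnit (m ! : ZMod p) :=
  (ZMod.isUnit_iff_coprime _ _).mpr ((Fact.out : p.Prime).coprime_factorial_of_lt hm).symm

lemma two_ne_zero_zmod (hp : 2 < p) : (2 : ZMod p) ≠ 0 :=
  (isUnit_natCast_of_isUnit_factorial (isUnit_factorial_zmod hp) two_ne_zero le_rfl).ne_zero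

lemma zmod_pow_sub_two (hp : 2 < p) (x : ZMod p) : x ^ (p - 2) = x⁻¹ := by
  rcases eq_or_ne x 0 with rfl | hx
  · rw [zero_pow (by lia), inv_zero]
  · rw [← mul_eq_one_iff_eq_inv₀ hx, ← pow_succ, show p - 2 + 1 = p - 1 by lia,
      ZMod.pow_card_sub_one_eq_one hx]

lemma zmod_pow_sub_three (hp : 3 < p) (x : ZMod p) : x ^ (p - 3) = x⁻¹ * x⁻¹ := by
  rcases eq_or_ne x 0 with rfl | hx
  · rw [zero_pow (by lia), inv_zero, mul_zero]
  · rw [eq_mul_inv_iff_mul_eq₀ hx, ← pow_succ, show p - 3 + 1 = p - 2 by lia,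
      zmod_pow_sub_two (by lia)]

lemma sum_Icc_half_pow_eq_zero {n i : ℕ} (hpn : p = 2 * n + 1) (hi : Even i) (hi0 : i ≠ 0)
    (hip : i < p - 1) : ∑ j ∈ Icc 1 n, (j : ZMod p) ^ i = 0 := by
  have full := FiniteField.sum_pow_lt_card_sub_one (ZMod p) i (by rwa [ZMod.card])
  rw [sum_univ_zmod, zero_pow hi0, zero_add, show p - 1 = 2 * n by lia, sum_Icc_one_two_mul]
    at full
  have fold : ∀ j ∈ Icc 1 n, (j : ZMod p) ^ i + ((2 * n + 1 - j : ℕ) : ZMod p) ^ i =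
      2 * (j : ZMod p) ^ i := by
    intro j hj
    have hjn := (mem_Icc.mp hj).2
    rw [← hpn, Nat.cast_sub (by lia), CharP.cast_eq_zero (ZMod p) p, zero_sub, hi.neg_pow, two_mul]
  rw [sum_congr rfl fold, ← mul_sum] at full
  exact (mul_eq_zero.mp full).resolve_left (two_ne_zero_zmod (by lia))

lemma eval_add_one_add_eval_antisymmetrization_harmonicNewton (hp : 2 < p) (a : ZMod p) :
    (antisymmetrization (harmonicNewton (ZMod p) (p - 1))).eval (a + 1) +
      (antisymmetrization (harmonicNewton (ZMod p) (p - 1))).eval a = -2 * (a + 1)⁻¹ := by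
  set F := harmonicNewton (ZMod p) (p - 1)
  have hN := isUnit_factorial_zmod (show p - 1 < p by lia)
  rw [eval_antisymmetrization, eval_antisymmetrization]
  obtain ⟨m, hmp, rfl⟩ : ∃ m < p, (m : ZMod p) = a := ⟨a.val, a.val_lt, a.natCast_zmod_val⟩
  have p_cast : (p : ZMod p) = 0 := CharP.cast_eq_zero _ _
  rcases (Nat.le_sub_one_of_lt hmp).eq_or_lt with rfl | hm
  · rw [Nat.cast_pred (by lia), p_cast]
    ring_nf
  · have upper := eval_succ_add_eval_harmonicNewton hN hm
    have lower := eval_succ_add_eval_harmonicNewton hN (show p - 2 - m < p - 1 by lia)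
    have p_odd : Odd p := (Fact.out : p.Prime).odd_of_ne_two hp.ne'
    have sign : (-1 : ZMod p) ^ (p - 1 - m) = (-1) ^ m :=
      neg_one_pow_congr (by grind)
    have succ_cast : ((p - 1 - m : ℕ) : ZMod p) = -1 - m := by
      rw [Nat.cast_sub (by lia), Nat.cast_pred (by lia), p_cast, zero_sub]
    have pred_cast : ((p - 2 - m : ℕ) : ZMod p) = -1 - (m + 1) := by
      rw [show p - 2 - m = p - 1 - m - 1 by lia, Nat.cast_pred (by lia), succ_cast]
      ring
    rw [show p - 2 - m + 1 = p - 1 - m by lia, succ_cast, pred_cast, sign,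
      Ring.inverse_eq_inv, show (-1 - m : ZMod p) = -(m + 1) by ring, inv_neg] at lower
    rw [pow_succ, Ring.inverse_eq_inv, Nat.cast_succ] at upper
    rw [show (-1 - m : ZMod p) = -(m + 1) by ring]
    linear_combination upper - lower

lemma comp_X_add_one_add_antisymmetrization_harmonicNewton (hp : 2 < p) :
    (antisymmetrization (harmonicNewton (ZMod p) (p - 1))).comp (X + 1) +
      antisymmetrization (harmonicNewton (ZMod p) (p - 1)) = -2 * (X + 1) ^ (p - 2) := by
  set G := antisymmetrization (harmonicNewton (ZMod p) (p - 1))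
  have G_degree : G.natDegree ≤ p - 1 :=
    (natDegree_antisymmetrization_le _).trans (natDegree_newtonSeries_le _ _)
  have shift_degree : (X + 1 : (ZMod p)[X]).natDegree ≤ 1 := by compute_degree
  have comp_degree : (G.comp (X + 1)).natDegree ≤ p - 1 :=
    (natDegree_comp_le.trans (mul_le_of_le_one_right (Nat.zero_le _) shift_degree)).trans G_degree
  have power_degree : (-2 * (X + 1) ^ (p - 2) : (ZMod p)[X]).natDegree ≤ p - 1 := by
    compute_degree
    lia
  rw [← sub_eq_zero]
  refine eq_zero_of_natDegree_lt_card_of_eval_eq_zero _ Function.injective_id (fun a ↦ ?_) ?_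
  · have recursion := eval_add_one_add_eval_antisymmetrization_harmonicNewton hp a
    simp only [id_eq, eval_sub, eval_add, eval_comp, eval_X, eval_one, eval_mul, eval_pow,
      eval_neg, eval_ofNat, zmod_pow_sub_two hp]
    exact sub_eq_zero.mpr recursion
  · have degree := natDegree_sub_le_of_le (natDegree_add_le_of_le comp_degree G_degree) power_degree
    rw [ZMod.card]
    lia

lemma eval_add_one_add_eval_derivative_antisymmetrization_harmonicNewton (hp : 2 < p)
    (a : ZMod p) :
    (derivative (antisymmetrization (harmonicNewton (ZMod p) (p - 1)))).eval (a + 1) +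
      (derivative (antisymmetrization (harmonicNewton (ZMod p) (p - 1)))).eval a =
        4 * (a + 1) ^ (p - 3) := by
  have identity := congrArg (fun q ↦ (derivative q).eval a)
    (comp_X_add_one_add_antisymmetrization_harmonicNewton hp)
  have cast_sub_two : ((p - 2 : ℕ) : ZMod p) = -2 := by
    rw [Nat.cast_sub hp.le, CharP.cast_eq_zero, zero_sub, Nat.cast_ofNat]
  have exponent : p - 2 - 1 = p - 3 := by lia
  simp only [derivative_add, derivative_comp, derivative_X, derivative_one, add_zero, one_mul,
    eval_add, eval_comp, eval_X, eval_one, neg_mul, derivative_mul,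
    derivative_ofNat, zero_mul, derivative_pow, cast_sub_two, map_neg, exponent, mul_one, mul_neg,
    zero_add, neg_neg, eval_mul, eval_ofNat, eval_C, eval_pow] at identity
  linear_combination identity

lemma eval_derivative_harmonicNewton {n : ℕ} (hp : 3 < p) (hpn : p = 2 * n + 1) :
    (derivative (harmonicNewton (ZMod p) (p - 1))).eval (n : ZMod p) =
      2 * (-1) ^ n * ∑ j ∈ Icc 1 n, (-1) ^ j * (j : ZMod p) ^ (p - 3) := by
  set G := antisymmetrization (harmonicNewton (ZMod p) (p - 1)) with hG
  have recursion := eval_add_one_add_eval_derivative_antisymmetrization_harmonicNewton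
    (p := p) (by lia)
  have symmetric := eval_derivative_antisymmetrization (harmonicNewton (ZMod p) (p - 1))
  have telescope := eq_neg_one_pow_mul_of_succ_add (n := n)
    (u := fun m : ℕ ↦ (derivative G).eval (m : ZMod p))
    (c := fun m : ℕ ↦ 4 * (m : ZMod p) ^ (p - 3)) fun m _ ↦ by
      simpa only [Nat.cast_succ] using recursion m
  have fixed : (-1 - n : ZMod p) = n := by
    linear_combination -two_mul_add_one_eq_zero_zmod hpn
  have critical : (derivative G).eval 0 = 0 := by
    have at_neg_one := recursion (-1)
    rw [neg_add_cancel, zero_pow (by lia), mul_zero, ← hG, symmetric (-1), symmetric 0, sub_self,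
      sub_zero] at at_neg_one
    rw [symmetric 0, sub_zero]
    refine (mul_eq_zero.mp ?_).resolve_left (two_ne_zero_zmod (p := p) (by lia))
    linear_combination at_neg_one
  refine mul_left_cancel₀ (two_ne_zero_zmod (p := p) (by lia)) ?_
  rw [Nat.cast_zero, critical, zero_add, symmetric n, fixed] at telescope
  rw [two_mul, telescope, mul_sum, mul_sum, mul_sum]
  exact sum_congr rfl fun j _ ↦ by ring

lemma sum_neg_one_pow_mul_pow_sub_three {n : ℕ} (hp : 3 < p) (hpn : p = 2 * n + 1) :
    ∑ j ∈ Icc 1 n, (-1) ^ j * (j : ZMod p) ^ (p - 3) = 2 * (-1) ^ n * eulerInt (p - 3) := by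
  have euler := neg_one_pow_mul_eulerInt (R := ZMod p) (N := p - 3) (by grind) (by lia)
    (two_mul_add_one_eq_zero_zmod hpn)
  have fermat : (2 : ZMod p) * 2 * 2 ^ (p - 3) = 1 := by
    rw [← ZMod.pow_card_sub_one_eq_one (two_ne_zero_zmod (p := p) (by lia)),
      show p - 1 = 2 + (p - 3) by lia, pow_add, pow_two]
  rw [mul_assoc, euler, ← mul_assoc, mul_sum]
  refine sum_congr rfl fun j _ ↦ ?_
  rw [mul_pow]
  linear_combination (-(-1) ^ j * (j : ZMod p) ^ (p - 3)) * fermat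

lemma harmonicDefect_zmod {n : ℕ} (hp : 3 < p) (hpn : p = 2 * n + 1) :
    harmonicDefect (ZMod p) n = ∑ j ∈ Icc 1 n, (-1) ^ j * (j : ZMod p) ^ (p - 3) := by
  rw [harmonicDefect, ← sub_eq_zero, ← neg_eq_zero, ← sum_sub_distrib, ← sum_neg_distrib,
    ← sum_Icc_half_pow_eq_zero hpn (i := p - 3) (by grind) (by lia) (by lia)]
  refine sum_congr rfl fun j hj ↦ ?_
  have reflection : ((2 * n + 1 - j : ℕ) : ZMod p) = -j := by
    have hjn := (mem_Icc.mp hj).2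
    rw [← hpn, Nat.cast_sub (by lia), CharP.cast_eq_zero (ZMod p) p, zero_sub]
  rw [reflection, Ring.inverse_eq_inv, Ring.inverse_eq_inv, inv_neg, zmod_pow_sub_three hp]
  ring

end ModP

section PadicIntegers

variable {p : ℕ} [Fact p.Prime]

lemma isUnit_factorial_padicInt {m : ℕ} (hm : m < p) : IsUnit (m ! : ℤ_[p]) :=
  PadicInt.isUnit_iff.mpr <| PadicInt.norm_natCast_eq_one_iff.mpr <|
    (Fact.out : p.Prime).coprime_factorial_of_lt hm

lemma isUnit_two_padicInt (hp : 2 < p) : IsUnit (2 : ℤ_[p]) :=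
  isUnit_natCast_of_isUnit_factorial (isUnit_factorial_padicInt hp) two_ne_zero le_rfl

lemma natCast_dvd_of_toZMod_eq_zero {w : ℤ_[p]} (hw : PadicInt.toZMod w = 0) :
    (p : ℤ_[p]) ∣ w := by
  rwa [← Ideal.mem_span_singleton, ← PadicInt.maximalIdeal_eq_span_p, ← PadicInt.ker_toZMod,
    RingHom.mem_ker]

lemma toZMod_harmonicDefect {n : ℕ} (hp : 3 < p) (hpn : p = 2 * n + 1) :
    PadicInt.toZMod (harmonicDefect ℤ_[p] n) = 2 * (-1) ^ n * (eulerInt (p - 3) : ZMod p) := by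
  rw [map_harmonicDefect _ (isUnit_factorial_padicInt (by lia)), harmonicDefect_zmod hp hpn,
    sum_neg_one_pow_mul_pow_sub_three hp hpn]

lemma toZMod_eval_derivative_harmonicNewton {n : ℕ} (hp : 3 < p) (hpn : p = 2 * n + 1) :
    PadicInt.toZMod ((derivative (harmonicNewton ℤ_[p] (p - 1))).eval (n : ℤ_[p])) =
      4 * (eulerInt (p - 3) : ZMod p) := by
  have sign : (-1 : ZMod p) ^ n * (-1) ^ n = 1 := by simp [← mul_pow]
  rw [← eval₂_at_natCast, ← eval_map, ← derivative_map,
    map_harmonicNewton _ (isUnit_factorial_padicInt (by lia)),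
    eval_derivative_harmonicNewton hp hpn, sum_neg_one_pow_mul_pow_sub_three hp hpn]
  linear_combination 4 * (eulerInt (p - 3) : ZMod p) * sign

lemma dvd_harmonicDefect_sub_eval_derivative_harmonicNewton_add {n : ℕ} (hp : 3 < p)
    (hpn : p = 2 * n + 1) :
    (p : ℤ_[p]) ∣ (-1) ^ n * harmonicDefect ℤ_[p] n -
      (derivative (harmonicNewton ℤ_[p] (p - 1))).eval (n : ℤ_[p]) + 2 * eulerInt (p - 3) := by
  have sign : (-1 : ZMod p) ^ n * (-1) ^ n = 1 := by simp [← mul_pow]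
  refine natCast_dvd_of_toZMod_eq_zero ?_
  rw [map_add, map_sub, map_mul, map_mul, toZMod_harmonicDefect hp hpn,
    toZMod_eval_derivative_harmonicNewton hp hpn, map_pow, map_neg, map_one, map_ofNat,
    map_intCast]
  linear_combination 2 * (eulerInt (p - 3) : ZMod p) * sign

theorem sq_dvd_sum_centralBinom_mul_ringHarmonic_sub {n : ℕ} (hp : 3 < p)
    (hpn : p = 2 * n + 1) :
    (p : ℤ_[p]) ^ 2 ∣ ∑ k ∈ range p, k.centralBinom * 2⁻¹ʳ ^ k * ringHarmonic ℤ_[p] k -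
      ((-1) ^ n * ringHarmonic ℤ_[p] n * 2⁻¹ʳ - p * eulerInt (p - 3)) := by
  have hfact := isUnit_factorial_padicInt (show p - 1 < p by lia)
  have half := Ring.mul_inverse_cancel _ (isUnit_two_padicInt (p := p) (by lia))
  set h : ℤ_[p] := 2⁻¹ʳ
  set F := harmonicNewton ℤ_[p] (p - 1) with hF
  have p_cast : (p : ℤ_[p]) = 2 * n + 1 := by exact_mod_cast congrArg (Nat.cast : ℕ → ℤ_[p]) hpn
  have sum_eq := eval_neg_half_newtonSeries (ringHarmonic ℤ_[p]) hfact half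
  rw [← harmonicNewton, ← hF, Nat.sub_one_add_one (by lia)] at sum_eq
  obtain ⟨r, taylor⟩ := F.binomExpansion n (-(p * h))
  rw [show (n : ℤ_[p]) + -(p * h) = -h by rw [p_cast]; linear_combination -(n : ℤ_[p]) * half]
    at taylor
  have value : 2 * F.eval (n : ℤ_[p]) =
      (-1) ^ n * (ringHarmonic ℤ_[p] n + p * harmonicDefect ℤ_[p] n) := by
    rw [eval_natCast_harmonicNewton hfact (by lia), p_cast,
      ← two_mul_sum_one_sub_neg_one_pow_mul_inverse (isUnit_factorial_padicInt (by lia))]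
    ring
  obtain ⟨q, first_order⟩ := dvd_harmonicDefect_sub_eval_derivative_harmonicNewton_add hp hpn
  refine ⟨h * q + r * h ^ 2, ?_⟩
  rw [← sum_eq]
  linear_combination taylor + h * value - (F.eval (n : ℤ_[p]) + p * eulerInt (p - 3)) * half +
    p * h * first_order

lemma coe_two_inverse_padicInt (hp : 2 < p) : ((2⁻¹ʳ : ℤ_[p]) : ℚ_[p]) = 2⁻¹ := by
  have h := map_ringInverse_of_isUnit (PadicInt.Coe.ringHom (p := p)) (isUnit_two_padicInt hp)
  rwa [map_ofNat, Ring.inverse_eq_inv] at h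

lemma coe_ringHarmonic_padicInt {k : ℕ} (hk : k < p) :
    ((ringHarmonic ℤ_[p] k : ℤ_[p]) : ℚ_[p]) = (H k : ℚ) := by
  have integral := map_ringHarmonic (PadicInt.Coe.ringHom (p := p)) (isUnit_factorial_padicInt hk)
  have rational := map_ringHarmonic (Rat.castHom ℚ_[p])
    (isUnit_iff_ne_zero.mpr (Nat.cast_ne_zero.mpr k.factorial_ne_zero))
  rw [ringHarmonic_rat] at rational
  exact integral.trans rational.symm

lemma ratModEq_of_pow_dvd_sub {r : ℕ} {x y : ℤ_[p]} {a b : ℚ} (hx : (x : ℚ_[p]) = a)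
    (hy : (y : ℚ_[p]) = b) (h : (p : ℤ_[p]) ^ r ∣ x - y) : ratModEq (p ^ r) a b := by
  have clear_den : (x - y) * ((a - b).den : ℤ_[p]) = ((a - b).num : ℤ_[p]) := by
    apply Subtype.coe_injective
    push_cast
    rw [hx, hy]
    exact_mod_cast congrArg (Rat.cast : ℚ → ℚ_[p]) (Rat.mul_den_eq_num (a - b))
  rw [ratModEq, Nat.cast_pow, ← PadicInt.pow_p_dvd_int_iff, ← clear_den]
  exact h.mul_right _

end PadicIntegers

theorem stmt3 (p : ℕ) (hp : p.Prime) (hp3 : 3 < p) :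
    ratModEq (p ^ 2) (∑ k ∈ Finset.range p, ((2 * k).choose k : ℚ) / 2 ^ k * H k)
      ((-1) ^ ((p - 1) / 2) * H ((p - 1) / 2) / 2 - p * eulerNumber (p - 3)) := by
  have : Fact p.Prime := ⟨hp⟩
  obtain ⟨n, hpn⟩ := hp.odd_of_ne_two (by lia)
  rw [show (p - 1) / 2 = n by lia]
  refine ratModEq_of_pow_dvd_sub ?_ ?_ (sq_dvd_sum_centralBinom_mul_ringHarmonic_sub hp3 hpn)
  · rw [PadicInt.coe_sum, Rat.cast_sum]
    refine sum_congr rfl fun k hk ↦ ?_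
    push_cast
    rw [coe_ringHarmonic_padicInt (mem_range.mp hk), coe_two_inverse_padicInt (by lia), inv_pow,
      ← div_eq_mul_inv, Nat.centralBinom_eq_two_mul_choose]
  · rw [← eulerInt_cast]
    push_cast
    rw [coe_ringHarmonic_padicInt (by lia), coe_two_inverse_padicInt (by lia), ← div_eq_mul_inv]
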